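/- arXiv:2104.10165 — 2 statements merged into one kernel-verified Lean document; each statement's English description precedes it below -/
import Mathlib

section
/- The group H has exactly 7 conjugacy classes. -/
open Matrix Complex
open scoped MatrixGroups

noncomputable section

def jM : Matrix (Fin 2) (Fin 2) ℂ := !![0, Complex.I; Complex.I, 0]
def dM : Matrix (Fin 2) (Fin 2) ℂ :=
  ((Real.sqrt 2 : ℂ))⁻¹ • !![-1, 1; 1, 1]

def H : Subgroup (GL (Fin 2) ℂ) :=
  Subgroup.closure {g : GL (Fin 2) ℂ |
    (g : Matrix (Fin 2) (Fin 2) ℂ) = jM ∨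
    (g : Matrix (Fin 2) (Fin 2) ℂ) = dM}

/-!
If a finite group `G` has an abelian subgroup `A` of index two and `x ∉ A`, put
`C = A ⊓ centralizer {x}`. This does not depend on `x`, since the elements outside `A` differ by
elements of the abelian group `A`. The centralizer of `g` is therefore `⊤` if `g ∈ C`, is `A` if
`g ∈ A \ C`, and has order `2 |C|` if `g ∉ A`. The orders of the centralizers add up to the class
number times `|G| = 2 |A|`, so twice the class number is `|A| + 3 |C|`.

In `H` the element `r = j d` satisfies `r ^ 4 = j ^ 2 = -1`, so it has order `8`, and together with
`d ^ 2 = 1` this forces `⁅d, r⁆ = r ^ 2`. Thus `H` is semidihedral of order 16: `A = zpowers r` has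
index two, and `C` consists of the `a ∈ A` with `a ^ 2 = 1`, so that `2 * 7 = 8 + 3 * 2`.
-/

open Subgroup
open scoped commutatorElement

section IndexTwo

variable {G : Type*} [Group G]

theorem card_conjClasses_mul_card_eq_sum_card_centralizer [Fintype G] :
    Nat.card (ConjClasses G) * Nat.card G = ∑ g : G, Nat.card (centralizer {g}) := by
  rw [← card_comm_eq_card_conjClasses_mul_card,
    Nat.card_congr (Equiv.subtypeProdEquivSigmaSubtype Commute), Nat.card_sigma]
  refine Finset.sum_congr rfl fun g _ ↦ Nat.card_congr (Equiv.subtypeEquivRight fun h ↦ ?_)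
  rw [mem_centralizer_singleton_iff]
  exact eq_comm

theorem mem_centralizer_singleton_comm {g h : G} :
    g ∈ centralizer {h} ↔ h ∈ centralizer {g} := by
  simp only [mem_centralizer_singleton_iff, eq_comm]

variable {A : Subgroup G}

theorem index_eq_two_of_closure_insert_eq_top {d : G} (hgen : closure (insert d (A : Set G)) = ⊤)
    (hd : d ∉ A) (hd_sq : d ^ 2 ∈ A) (hconj : ∀ a ∈ A, d * a * d⁻¹ ∈ A) : A.index = 2 := by
  refine index_eq_two_iff_exists_notMem_and.2 ⟨d, hd, fun g ↦ ?_⟩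
  have mul_left_d (g : G) (hg : g * d ∈ A ∨ g ∈ A) : d * g * d ∈ A ∨ d * g ∈ A := by
    refine hg.symm.imp (fun hg ↦ ?_) (fun hg ↦ ?_)
    · simpa [sq, mul_assoc] using mul_mem (hconj g hg) hd_sq
    · simpa [mul_assoc] using hconj _ hg
  have mul_left_of_mem (a g : G) (ha : a ∈ A) (hg : g * d ∈ A ∨ g ∈ A) :
      a * g * d ∈ A ∨ a * g ∈ A := by
    simpa only [mul_assoc, A.mul_mem_cancel_left ha] using hg
  induction hgen ▸ mem_top g using closure_induction_left with
  | one => exact .inr A.one_mem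
  | mul_left x hx g _ ih =>
    obtain rfl | hx := hx
    · exact mul_left_d g ih
    · exact mul_left_of_mem x g hx ih
  | inv_mul_cancel x hx g _ ih =>
    obtain rfl | hx := hx
    · have := mul_left_of_mem (x ^ 2)⁻¹ (x * g) (inv_mem hd_sq) (mul_left_d g ih)
      simpa [sq, mul_assoc] using this
    · exact mul_left_of_mem x⁻¹ g (inv_mem hx) ih

theorem relIndex_eq_index_of_prime_index [A.Normal] {K : Subgroup G} (hA : A.index.Prime)
    (hK : ¬K ≤ A) : A.relIndex K = A.index :=
  ((Nat.dvd_prime hA).1 (A.relIndex_dvd_index_of_normal K)).resolve_left (relIndex_eq_one.not.2 hK)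

theorem card_eq_index_mul_card_inf [A.Normal] {K : Subgroup G} (hA : A.index.Prime)
    (hK : ¬K ≤ A) : Nat.card K = A.index * Nat.card ↥(A ⊓ K) := by
  rw [← relIndex_eq_index_of_prime_index hA hK, ← inf_relIndex_right, mul_comm,
    ← relIndex_bot_left, ← relIndex_bot_left, relIndex_mul_relIndex _ _ _ bot_le inf_le_right]

variable [IsMulCommutative A]

theorem le_centralizer_singleton_of_mem {g : G} (hg : g ∈ A) : A ≤ centralizer {g} :=
  A.le_centralizer.trans (centralizer_le (Set.singleton_subset_iff.2 hg))

theorem inf_centralizer_singleton_eq_of_notMem (hA : A.index = 2) {x y : G} (hx : x ∉ A)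
    (hy : y ∉ A) : A ⊓ centralizer {x} = A ⊓ centralizer {y} := by
  have hxy : y * x⁻¹ ∈ A := by simp [mul_mem_iff_of_index_two hA, hx, hy]
  ext c
  simp only [mem_inf, and_congr_right_iff]
  intro hc
  rw [mem_centralizer_singleton_comm, mem_centralizer_singleton_comm (h := y),
    ← (centralizer {c}).mul_mem_cancel_left (le_centralizer_singleton_of_mem hc hxy),
    inv_mul_cancel_right]

theorem centralizer_singleton_eq_top_of_mem (hA : A.index = 2) {x g : G} (hx : x ∉ A)
    (hg : g ∈ A ⊓ centralizer {x}) : centralizer {g} = ⊤ := by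
  refine (eq_top_iff' _).2 fun h ↦ ?_
  by_cases hh : h ∈ A
  · exact le_centralizer_singleton_of_mem hg.1 hh
  · rw [inf_centralizer_singleton_eq_of_notMem hA hx hh] at hg
    exact mem_centralizer_singleton_comm.1 hg.2

theorem centralizer_singleton_eq_of_notMem (hA : A.index = 2) {x g : G} (hx : x ∉ A)
    (hg : g ∈ A) (hgx : g ∉ centralizer {x}) : centralizer {g} = A := by
  refine le_antisymm (fun h hh ↦ ?_) (le_centralizer_singleton_of_mem hg)
  by_contra hhA
  have hgh : g ∈ A ⊓ centralizer {h} := ⟨hg, mem_centralizer_singleton_comm.1 hh⟩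
  rw [inf_centralizer_singleton_eq_of_notMem hA hhA hx] at hgh
  exact hgx hgh.2

theorem card_centralizer_singleton_of_notMem (hA : A.index = 2) {x g : G} (hx : x ∉ A)
    (hg : g ∉ A) : Nat.card (centralizer {g}) = 2 * Nat.card ↥(A ⊓ centralizer {x}) := by
  have hK : ¬centralizer {g} ≤ A := fun h ↦ hg (h (mem_centralizer_singleton_iff.2 rfl))
  have := normal_of_index_eq_two hA
  rw [card_eq_index_mul_card_inf (hA ▸ Nat.prime_two) hK, hA,
    inf_centralizer_singleton_eq_of_notMem hA hx hg]

-- Written as a sum of indicator functions of `g`, so that summing over `g` only counts elements.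
open Classical in
theorem card_centralizer_singleton_eq_add (hA : A.index = 2) {x : G} (hx : x ∉ A) (g : G) :
    Nat.card (centralizer {g}) =
      (if g ∈ A then Nat.card A else 0) +
      (if g ∈ A ⊓ centralizer {x} then Nat.card A else 0) +
      (if g ∉ A then 2 * Nat.card ↥(A ⊓ centralizer {x}) else 0) := by
  by_cases hg : g ∈ A
  · by_cases hgx : g ∈ centralizer {x}
    · rw [centralizer_singleton_eq_top_of_mem hA hx ⟨hg, hgx⟩, card_top, ← A.card_mul_index, hA]
      simp [hg, hgx, mul_two]
    · simp [centralizer_singleton_eq_of_notMem hA hx hg hgx, hg, hgx]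
  · simp [card_centralizer_singleton_of_notMem hA hx hg, hg]

theorem two_mul_card_conjClasses_of_index_eq_two [Finite G] (hA : A.index = 2) {x : G}
    (hx : x ∉ A) :
    2 * Nat.card (ConjClasses G) = Nat.card A + 3 * Nat.card ↥(A ⊓ centralizer {x}) := by
  classical
  have := Fintype.ofFinite G
  have hG : Nat.card G = Nat.card A * 2 := by rw [← hA, A.card_mul_index]
  have hcompl : Nat.card {g // g ∉ A} = Nat.card A := by
    have := Nat.card_congr (Equiv.sumCompl (· ∈ A))
    rw [Nat.card_sum, hG] at this
    change Nat.card A + _ = _ at this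
    lia
  have hsum := card_conjClasses_mul_card_eq_sum_card_centralizer (G := G)
  simp_rw [card_centralizer_singleton_eq_add hA hx, Finset.sum_add_distrib, ← Finset.sum_filter,
    Finset.sum_const, ← Fintype.card_subtype, ← Nat.card_eq_fintype_card] at hsum
  rw [hcompl, hG] at hsum
  refine Nat.eq_of_mul_eq_mul_left (Nat.card_pos (α := A)) ?_
  simp only [smul_eq_mul] at hsum
  linarith

end IndexTwo

theorem card_subtype_pow_eq_one_of_isCyclic (C : Type*) [Group C] [IsCyclic C] [Finite C] (k : ℕ) :
    Nat.card {c : C // c ^ k = 1} = (Nat.card C).gcd k := by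
  let _ : CommGroup C := IsCyclic.commGroup
  exact IsCyclic.card_powMonoidHom_ker C k

section Metacyclic

variable {G : Type*} [Group G] {r d : G} {k : ℕ}

theorem commutatorElement_eq_pow_of_mem_zpowers (h : ⁅d, r⁆ = r ^ k) {a : G}
    (ha : a ∈ zpowers r) : ⁅d, a⁆ = a ^ k := by
  obtain ⟨i, rfl⟩ := ha
  have hconj : d * r * d⁻¹ = r ^ (k + 1) := by
    rw [pow_succ, ← h, commutatorElement_def, inv_mul_cancel_right]
  calc ⁅d, r ^ i⁆ = (d * r * d⁻¹) ^ i * (r ^ i)⁻¹ := by rw [conj_zpow, commutatorElement_def]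
    _ = (r ^ i) ^ k := by rw [hconj]; group

theorem card_zpowers_inf_centralizer (hr : IsOfFinOrder r) (h : ⁅d, r⁆ = r ^ k) :
    Nat.card ↥(zpowers r ⊓ centralizer {d}) = (orderOf r).gcd k := by
  have : Finite (zpowers r) := hr.finite_zpowers
  calc Nat.card ↥(zpowers r ⊓ centralizer {d})
    _ = Nat.card {a : zpowers r // (a : G) ∈ centralizer {d}} :=
      Nat.card_congr (Equiv.subtypeSubtypeEquivSubtypeInter (· ∈ zpowers r) _).symm
    _ = Nat.card {a : zpowers r // a ^ k = 1} :=
      Nat.card_congr <| Equiv.subtypeEquivRight fun a ↦ by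
        rw [mem_centralizer_singleton_comm, mem_centralizer_singleton_iff,
          ← commutatorElement_eq_one_iff_mul_comm, commutatorElement_eq_pow_of_mem_zpowers h a.2]
        norm_cast
    _ = (orderOf r).gcd k := by rw [card_subtype_pow_eq_one_of_isCyclic, Nat.card_zpowers]

theorem index_zpowers_eq_two (hgen : closure {r, d} = ⊤) (hd : d ∉ zpowers r)
    (hd_sq : d ^ 2 ∈ zpowers r) (h : ⁅d, r⁆ = r ^ k) : (zpowers r).index = 2 := by
  refine index_eq_two_of_closure_insert_eq_top ?_ hd hd_sq fun a ha ↦ ?_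
  · refine top_le_iff.1 (hgen ▸ closure_mono (Set.pair_subset ?_ ?_)) <;> simp
  · have hda := commutatorElement_eq_pow_of_mem_zpowers h ha
    rw [commutatorElement_def, mul_inv_eq_iff_eq_mul] at hda
    exact hda ▸ mul_mem (pow_mem ha k) ha

theorem two_mul_card_conjClasses_of_closure_pair_eq_top (hgen : closure {r, d} = ⊤)
    (hr : IsOfFinOrder r) (hd : d ∉ zpowers r) (hd_sq : d ^ 2 ∈ zpowers r) (h : ⁅d, r⁆ = r ^ k) :
    2 * Nat.card (ConjClasses G) = orderOf r + 3 * (orderOf r).gcd k := by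
  have hindex := index_zpowers_eq_two hgen hd hd_sq h
  have : Finite (zpowers r) := hr.finite_zpowers
  have : Finite G := Nat.finite_of_card_ne_zero <| by
    rw [← (zpowers r).card_mul_index, hindex]
    exact mul_ne_zero Nat.card_pos.ne' two_ne_zero
  rw [two_mul_card_conjClasses_of_index_eq_two hindex hd, Nat.card_zpowers,
    card_zpowers_inf_centralizer hr h]

theorem two_mul_card_conjClasses_closure_pair (hr : IsOfFinOrder r) (hd : d ∉ zpowers r)
    (hd_sq : d ^ 2 ∈ zpowers r) (h : ⁅d, r⁆ = r ^ k) :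
    2 * Nat.card (ConjClasses (Subgroup.closure {r, d})) =
      orderOf r + 3 * (orderOf r).gcd k := by
  let r' : Subgroup.closure {r, d} := ⟨r, subset_closure (by simp)⟩
  let d' : Subgroup.closure {r, d} := ⟨d, subset_closure (by simp)⟩
  have hmem {g : Subgroup.closure {r, d}} : g ∈ zpowers r' ↔ (g : G) ∈ zpowers r := by
    simp [Subgroup.mem_zpowers_iff, Subtype.ext_iff, r']
  have hgen : Subgroup.closure {r', d'} = ⊤ := by
    rw [← closure_closure_coe_preimage]
    congr 1
    ext g
    simp [Subtype.ext_iff, r', d']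
  have horder : orderOf r' = orderOf r := orderOf_mk ..
  rw [← horder]
  exact two_mul_card_conjClasses_of_closure_pair_eq_top hgen
    (Submonoid.isOfFinOrder_coe.1 hr) (hmem.not.2 hd) (hmem.2 hd_sq) (Subtype.ext h)

theorem commutatorElement_eq_pow_of_mul_sq (hd : d ^ 2 = 1) (h : (r * d) ^ 2 = r ^ (k + 2)) :
    ⁅d, r⁆ = r ^ k := by
  have hdrd : d * r * d = r ^ (k + 1) := mul_left_cancel (a := r) <| by
    rw [← pow_succ', ← h, sq]
    simp only [mul_assoc]
  have hinv : d⁻¹ = d := inv_eq_of_mul_eq_one_left (by rw [← sq, hd])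
  rw [commutatorElement_def, hinv, hdrd, pow_succ, mul_inv_cancel_right]

theorem notMem_zpowers_of_commutatorElement_eq_pow (h : ⁅d, r⁆ = r ^ k)
    (hk : ¬orderOf r ∣ k) : d ∉ zpowers r := by
  rintro ⟨i, rfl⟩
  rw [commutatorElement_eq_one_iff_commute.2 (Commute.zpow_self r i)] at h
  exact hk (orderOf_dvd_of_pow_eq_one h.symm)

theorem closure_mul_pair (a b : G) :
    Subgroup.closure {a * b, b} = Subgroup.closure {a, b} := by
  have left_mem (x : G) : x ∈ Subgroup.closure {x, b} := subset_closure (by simp)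
  have right_mem (x : G) : b ∈ Subgroup.closure {x, b} := subset_closure (by simp)
  refine le_antisymm ?_ ?_ <;> rw [closure_le, Set.pair_subset_iff]
  · exact ⟨mul_mem (left_mem a) (right_mem a), right_mem a⟩
  · exact ⟨(mul_mem_cancel_right (right_mem _)).1 (left_mem (a * b)), right_mem _⟩

end Metacyclic

theorem inv_sqrt_two_sq : ((Real.sqrt 2 : ℂ))⁻¹ ^ 2 = 1 / 2 := by
  rw [inv_pow, ← Complex.ofReal_pow, Real.sq_sqrt zero_le_two, Complex.ofReal_ofNat, one_div]

theorem jM_mul_jM : jM * jM = -1 := by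
  simp [jM, Matrix.one_fin_two]

theorem dM_mul_dM : dM * dM = 1 := by
  rw [dM, smul_mul_smul_comm, ← sq, inv_sqrt_two_sq, Matrix.one_fin_two]
  norm_num

theorem jM_mul_dM_sq : (jM * dM) ^ 2 = !![0, -1; 1, 0] := by
  rw [sq, dM, mul_smul_comm, smul_mul_smul_comm, ← sq, inv_sqrt_two_sq, jM]
  norm_num [mul_assoc]

theorem jM_mul_dM_pow_four : (jM * dM) ^ 4 = -1 := by
  rw [pow_mul _ 2 2, jM_mul_dM_sq]
  simp [sq, Matrix.one_fin_two]

/-- The matrix `jM` as an element of `GL (Fin 2) ℂ`; as `jM ^ 2 = -1`, its inverse is `-jM`. -/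
def jGL : GL (Fin 2) ℂ where
  val := jM
  inv := -jM
  val_inv := by simp [jM_mul_jM]
  inv_val := by simp [jM_mul_jM]

/-- The involution `dM` as an element of `GL (Fin 2) ℂ`. -/
def dGL : GL (Fin 2) ℂ where
  val := dM
  inv := dM
  val_inv := dM_mul_dM
  inv_val := dM_mul_dM

theorem H_eq_closure_pair : H = Subgroup.closure {jGL, dGL} := by
  rw [H]
  congr 1
  ext g
  simp [Units.ext_iff, jGL, dGL]

theorem jGL_sq : jGL ^ 2 = -1 := by
  rw [sq]; exact Units.ext jM_mul_jM

theorem dGL_sq : dGL ^ 2 = 1 := by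
  rw [sq]; exact Units.ext dM_mul_dM

theorem jGL_mul_dGL_pow_four : (jGL * dGL) ^ 4 = -1 :=
  Units.ext jM_mul_dM_pow_four

theorem orderOf_jGL_mul_dGL : orderOf (jGL * dGL) = 8 := by
  refine orderOf_eq_prime_pow (p := 2) (n := 2) ?_ ?_
  · rw [show 2 ^ 2 = 4 by rfl, jGL_mul_dGL_pow_four]
    intro h
    have := congrArg (fun g : GL (Fin 2) ℂ ↦ (g : Matrix (Fin 2) (Fin 2) ℂ) 0 0) h
    norm_num at this
  · rw [show 2 ^ (2 + 1) = 4 * 2 by rfl, pow_mul, jGL_mul_dGL_pow_four, neg_one_sq]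

theorem commutatorElement_dGL_jGL_mul_dGL : ⁅dGL, jGL * dGL⁆ = (jGL * dGL) ^ 2 := by
  refine commutatorElement_eq_pow_of_mul_sq dGL_sq ?_
  rw [jGL_mul_dGL_pow_four, mul_assoc, ← sq, dGL_sq, mul_one, jGL_sq]

theorem H_conj_classes : Nat.card (ConjClasses H) = 7 := by
  have hcomm := commutatorElement_dGL_jGL_mul_dGL
  have hr : IsOfFinOrder (jGL * dGL) := orderOf_pos_iff.1 (by simp [orderOf_jGL_mul_dGL])
  have hd : dGL ∉ zpowers (jGL * dGL) :=
    notMem_zpowers_of_commutatorElement_eq_pow hcomm (by norm_num [orderOf_jGL_mul_dGL])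
  have hd_sq : dGL ^ 2 ∈ zpowers (jGL * dGL) := dGL_sq ▸ one_mem _
  have hcard := two_mul_card_conjClasses_closure_pair hr hd hd_sq hcomm
  rw [closure_mul_pair, ← H_eq_closure_pair, orderOf_jGL_mul_dGL,
    show Nat.gcd 8 2 = 2 by rfl] at hcard
  lia
end
end

section
/- The subgroup T of G generated by {i, w} (the binary tetrahedral group) has order 24, is a normal subgroup of G of index 2, and the quotient group G/T is a cyclic group of order 2. -/
open Matrix Complex
open scoped MatrixGroups

noncomputable section

def iM : Matrix (Fin 2) (Fin 2) ℂ := !![0, 1; -1, 0]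
def kM : Matrix (Fin 2) (Fin 2) ℂ := !![Complex.I, 0; 0, -Complex.I]
def wM : Matrix (Fin 2) (Fin 2) ℂ :=
  (1 / 2 : ℂ) • !![-1 + Complex.I, 1 + Complex.I; -1 + Complex.I, -1 - Complex.I]
def cM : Matrix (Fin 2) (Fin 2) ℂ :=
  ((Real.sqrt 2 : ℂ))⁻¹ • !![-Complex.I, Complex.I; Complex.I, Complex.I]
def G : Subgroup (GL (Fin 2) ℂ) :=
  Subgroup.closure {g : GL (Fin 2) ℂ |
    (g : Matrix (Fin 2) (Fin 2) ℂ) = iM ∨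
    (g : Matrix (Fin 2) (Fin 2) ℂ) = wM ∨
    (g : Matrix (Fin 2) (Fin 2) ℂ) = dM}

def T : Subgroup G :=
  Subgroup.closure {g : G |
    ((g : GL (Fin 2) ℂ) : Matrix (Fin 2) (Fin 2) ℂ) = iM ∨
    ((g : GL (Fin 2) ℂ) : Matrix (Fin 2) (Fin 2) ℂ) = wM}

/-- The proposition that the quotient of `Γ` by the normal subgroup `K`
is a cyclic group of order 2. -/
def QuotIsCyclicOfOrderTwo {Γ : Type} [Group Γ] (K : Subgroup Γ) (hK : K.Normal) : Prop := by
  letI := hK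
  exact IsCyclic (Γ ⧸ K) ∧ Nat.card (Γ ⧸ K) = 2

/-!
Put `k = w * i * w⁻¹`. Conjugation by `w` sends `i` to `k` and `k` to `(i * k)⁻¹`, and
`⟨i⟩ ⊴ ⟨i, k⟩ ⊴ T ⊴ G` is a chain starting with a group of order `4`, in which each term arises
from the previous one by adjoining an element that normalizes it, lies outside it, and has its
`p`-th power in it for `p = 2, 3, 2` respectively; hence these primes are the successive indices.
The element `w` lies outside `⟨i, k⟩` because `3` does not divide `8`, and `d` lies
outside `T` because `T` has determinant `1` whereas `det d = -1`.

By Cayley–Hamilton all relations needed can be read off from traces and determinants: those of `w`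
and `i * w` make them of order `3`, and those of `d`, `d * i` and `d * w` make them involutions,
so that `d` inverts `i` and `w`.
-/

open Subgroup hiding closure

section GroupTheory

variable {Γ : Type*} [Group Γ]

theorem relIndex_zpowers_of_prime {K : Subgroup Γ} {g : Γ} {p : ℕ} [Fact p.Prime]
    (hgp : g ^ p ∈ K) (hg : g ∉ K) : K.relIndex (zpowers g) = p := by
  let x : zpowers g ⧸ K.subgroupOf (zpowers g) := (⟨g, mem_zpowers g⟩ : zpowers g)
  have hx : ∀ y, y ∈ zpowers x := by
    rintro ⟨_, n, rfl⟩
    exact ⟨n, rfl⟩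
  have hxp : x ^ p = 1 := (QuotientGroup.eq_one_iff _).2 (mem_subgroupOf.2 hgp)
  have hx1 : x ≠ 1 := fun h => hg (mem_subgroupOf.1 ((QuotientGroup.eq_one_iff _).1 h))
  calc K.relIndex (zpowers g) = orderOf x := (orderOf_eq_card_of_forall_mem_zpowers hx).symm
    _ = p := orderOf_eq_prime hxp hx1

theorem relIndex_sup_right_of_le_normalizer {H K : Subgroup Γ}
    (hHK : H ≤ normalizer (K : Set Γ)) : K.relIndex (H ⊔ K) = K.relIndex H := by
  have := normal_subgroupOf_of_le_normalizer hHK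
  have := normal_subgroupOf_sup_of_le_normalizer hHK
  exact Nat.card_congr
    (QuotientGroup.quotientInfEquivProdNormalizerQuotient H K hHK).toEquiv.symm

theorem mem_normalizer_closure_of_conj_mem {S : Set Γ} [Finite (Subgroup.closure S)] {g : Γ}
    (hconj : ∀ s ∈ S, g * s * g⁻¹ ∈ Subgroup.closure S) :
    g ∈ normalizer (Subgroup.closure S : Set Γ) := by
  have hmap : Subgroup.closure S ≤ (Subgroup.closure S).comap (MulAut.conj g).toMonoidHom :=
    (closure_le _).2 hconj
  exact mem_normalizer_fintype (S := (Subgroup.closure S : Set Γ)) fun _ hn => hmap hn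

theorem relIndex_closure_insert_of_prime {S : Set Γ} [Finite (Subgroup.closure S)] {g : Γ} {p : ℕ}
    [Fact p.Prime] (hconj : ∀ s ∈ S, g * s * g⁻¹ ∈ Subgroup.closure S)
    (hgp : g ^ p ∈ Subgroup.closure S) (hg : g ∉ Subgroup.closure S) :
    (Subgroup.closure S).relIndex (Subgroup.closure (insert g S)) = p := by
  have hnorm : zpowers g ≤ normalizer (Subgroup.closure S : Set Γ) :=
    zpowers_le.2 (mem_normalizer_closure_of_conj_mem hconj)
  rw [Set.insert_eq, Subgroup.closure_union, ← zpowers_eq_closure,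
    relIndex_sup_right_of_le_normalizer hnorm, relIndex_zpowers_of_prime hgp hg]

theorem card_closure_insert_of_prime {S : Set Γ} [Finite (Subgroup.closure S)] {g : Γ} {p : ℕ}
    [Fact p.Prime] (hconj : ∀ s ∈ S, g * s * g⁻¹ ∈ Subgroup.closure S)
    (hgp : g ^ p ∈ Subgroup.closure S) (hg : g ∉ Subgroup.closure S) :
    Nat.card (Subgroup.closure (insert g S)) = Nat.card (Subgroup.closure S) * p := by
  rw [← relIndex_bot_left, ← relIndex_bot_left,
    ← relIndex_mul_relIndex ⊥ _ _ bot_le (closure_mono (Set.subset_insert g S)),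
    relIndex_closure_insert_of_prime hconj hgp hg]

theorem card_closure_pair_eq_eight {i k : Γ} (hi : orderOf i = 4) (hki : k ^ 2 = i ^ 2)
    (hconj : k * i * k⁻¹ = i⁻¹) : Nat.card (Subgroup.closure {k, i}) = 8 := by
  have hcard : Nat.card (Subgroup.closure {i}) = 4 := by
    rw [← zpowers_eq_closure, Nat.card_zpowers, hi]
  have : Finite (Subgroup.closure {i}) := Nat.finite_of_card_ne_zero (by simp [hcard])
  have hi_mem : i ∈ Subgroup.closure {i} := mem_closure_singleton_self i
  have hk : k ∉ Subgroup.closure {i} := by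
    intro hk
    obtain ⟨n, rfl⟩ := mem_closure_singleton.1 hk
    have hinv : i = i⁻¹ := by rwa [(Commute.refl i).zpow_left n |>.mul_inv_cancel] at hconj
    have hi2 : i ^ 2 = 1 := by rw [sq, ← eq_inv_iff_mul_eq_one, ← hinv]
    exact absurd (hi ▸ orderOf_dvd_of_pow_eq_one hi2) (by decide)
  rw [card_closure_insert_of_prime (p := 2) (by simp [hconj]) (hki ▸ pow_mem hi_mem 2) hk, hcard]

theorem closure_pair_eq_closure_conj_insert (i w : Γ) :
    Subgroup.closure {i, w} = Subgroup.closure {w, w * i * w⁻¹, i} := by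
  refine le_antisymm ((closure_le _).2 ?_) ((closure_le _).2 ?_)
  · rintro s (rfl | rfl) <;> exact subset_closure (by simp)
  · have hi : i ∈ Subgroup.closure {i, w} := subset_closure (by simp)
    have hw : w ∈ Subgroup.closure {i, w} := subset_closure (by simp)
    rintro s (rfl | rfl | rfl)
    · exact hw
    · exact mul_mem (mul_mem hw hi) (inv_mem hw)
    · exact hi

theorem conj_eq_inv_of_sq_eq_one {d s : Γ} (hd : d ^ 2 = 1) (hds : (d * s) ^ 2 = 1) :
    d * s * d⁻¹ = s⁻¹ := by
  rw [inv_eq_of_mul_eq_one_right ((sq d).symm.trans hd)]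
  exact eq_inv_of_mul_eq_one_left (by rw [mul_assoc, ← sq, hds])

/-- In `Γ`, the elements `i` and `w` satisfy the relations of the standard generators of the
binary tetrahedral group: `i` of order `4` with `i ^ 2` central, and `w`, `i * w` of order
dividing `3`. -/
structure IsBinaryTetrahedralPair (i w : Γ) : Prop where
  orderOf_left : orderOf i = 4
  commute_sq : Commute w (i ^ 2)
  pow_three : w ^ 3 = 1
  mul_pow_three : (i * w) ^ 3 = 1

namespace IsBinaryTetrahedralPair

variable {i w : Γ} (h : IsBinaryTetrahedralPair i w)
include h

theorem conj_sq : (w * i * w⁻¹) ^ 2 = i ^ 2 := by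
  rw [conj_pow, h.commute_sq.mul_inv_cancel]

theorem conj_conj_eq : w * (w * i * w⁻¹) * w⁻¹ = (w * i * w⁻¹)⁻¹ * i⁻¹ := by
  have hprod : i * (w * i * w⁻¹) * (w * (w * i * w⁻¹) * w⁻¹) = 1 := by
    calc i * (w * i * w⁻¹) * (w * (w * i * w⁻¹) * w⁻¹)
        = (i * w) ^ 3 * (w ^ 3)⁻¹ := by simp only [pow_succ]; group
      _ = 1 := by rw [h.mul_pow_three, h.pow_three, inv_one, mul_one]
  rw [← _root_.mul_inv_rev, eq_inv_of_mul_eq_one_right hprod]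

theorem conj_by_conj_eq_inv : (w * i * w⁻¹) * i * (w * i * w⁻¹)⁻¹ = i⁻¹ := by
  set k := w * i * w⁻¹
  have hi4 : (i ^ 2)⁻¹ = i ^ 2 := by
    rw [inv_eq_iff_mul_eq_one, ← pow_add]
    exact orderOf_dvd_iff_pow_eq_one.1 h.orderOf_left.dvd
  have hik : (i * k) ^ 2 = i ^ 2 := by
    calc (i * k) ^ 2 = ((w * k * w⁻¹) ^ 2)⁻¹ := by
          rw [h.conj_conj_eq, ← _root_.mul_inv_rev, inv_pow, inv_inv]
      _ = (w * i ^ 2 * w⁻¹)⁻¹ := by rw [conj_pow, h.conj_sq]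
      _ = i ^ 2 := by rw [h.commute_sq.mul_inv_cancel, hi4]
  calc k * i * k⁻¹ = i⁻¹ * (i * k) ^ 2 * (k ^ 2)⁻¹ := by simp only [sq]; group
    _ = i⁻¹ := by rw [hik, h.conj_sq, mul_inv_cancel_right]

theorem card_closure : Nat.card (Subgroup.closure {i, w}) = 24 := by
  set k := w * i * w⁻¹
  have hcard : Nat.card (Subgroup.closure {k, i}) = 8 :=
    card_closure_pair_eq_eight h.orderOf_left h.conj_sq h.conj_by_conj_eq_inv
  have : Finite (Subgroup.closure {k, i}) := Nat.finite_of_card_ne_zero (by simp [hcard])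
  have hk_mem : k ∈ Subgroup.closure {k, i} := subset_closure (by simp)
  have hi_mem : i ∈ Subgroup.closure {k, i} := subset_closure (by simp)
  have hconj : ∀ s ∈ ({k, i} : Set Γ), w * s * w⁻¹ ∈ Subgroup.closure {k, i} := by
    rintro s (rfl | rfl)
    · rw [h.conj_conj_eq]
      exact mul_mem (inv_mem hk_mem) (inv_mem hi_mem)
    · exact hk_mem
  have hw : w ∉ Subgroup.closure {k, i} := by
    intro hw
    have hw8 : orderOf w ∣ 8 := hcard ▸ Subgroup.orderOf_dvd_natCard _ hw
    have hw3 : orderOf w ∣ 3 := orderOf_dvd_of_pow_eq_one h.pow_three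
    have hw1 : w = 1 := orderOf_eq_one_iff.1 (Nat.dvd_one.1 (Nat.dvd_gcd hw8 hw3))
    have hi3 : i ^ 3 = 1 := by simpa [hw1] using h.mul_pow_three
    exact absurd (h.orderOf_left ▸ orderOf_dvd_of_pow_eq_one hi3) (by decide)
  rw [closure_pair_eq_closure_conj_insert,
    card_closure_insert_of_prime (p := 3) hconj (h.pow_three ▸ one_mem _) hw, hcard]

end IsBinaryTetrahedralPair

end GroupTheory

section Matrices

variable {R : Type*} [CommRing R]

theorem sq_eq_trace_smul_sub_det_smul_one (A : Matrix (Fin 2) (Fin 2) R) :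
    A ^ 2 = A.trace • A - A.det • 1 := by
  nontriviality R
  have hCH := aeval_self_charpoly A
  simp only [charpoly_fin_two, map_add, map_sub, map_mul, map_pow, Polynomial.aeval_X,
    Polynomial.aeval_C, Algebra.algebraMap_eq_smul_one] at hCH
  rw [sub_add, sub_eq_zero] at hCH
  simpa using hCH

theorem pow_three_eq_one_of_trace_det {A : Matrix (Fin 2) (Fin 2) R} (htr : A.trace = -1)
    (hdet : A.det = 1) : A ^ 3 = 1 := by
  have hsq : A ^ 2 = -A - 1 := by simp [sq_eq_trace_smul_sub_det_smul_one, htr, hdet]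
  calc A ^ 3 = (-A - 1) * A := by rw [pow_succ, hsq]
    _ = -A ^ 2 - A := by rw [sub_mul, neg_mul, one_mul, sq]
    _ = 1 := by rw [hsq]; abel

theorem sq_eq_neg_one_of_trace_det {A : Matrix (Fin 2) (Fin 2) R} (htr : A.trace = 0)
    (hdet : A.det = 1) : A ^ 2 = -1 := by
  simp [sq_eq_trace_smul_sub_det_smul_one, htr, hdet]

theorem sq_eq_one_of_trace_det {A : Matrix (Fin 2) (Fin 2) R} (htr : A.trace = 0)
    (hdet : A.det = -1) : A ^ 2 = 1 := by
  simp [sq_eq_trace_smul_sub_det_smul_one, htr, hdet]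

end Matrices

theorem det_iM : iM.det = 1 := by simp [iM]

theorem det_wM : wM.det = 1 := by
  rw [wM, det_smul, det_fin_two_of, Fintype.card_fin]
  linear_combination (-1/2 : ℂ) * I_mul_I

theorem det_dM : dM.det = -1 := by
  have hsqrt : (Real.sqrt 2 : ℂ) ^ 2 = 2 := by exact_mod_cast Real.sq_sqrt zero_le_two
  rw [dM, det_smul, det_fin_two_of, Fintype.card_fin, inv_pow, hsqrt]
  norm_num

theorem trace_wM : wM.trace = -1 := by
  rw [wM, trace_smul, trace_fin_two_of, smul_eq_mul]
  ring

theorem trace_iM_mul_wM : (iM * wM).trace = -1 := by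
  rw [iM, wM, Matrix.mul_smul, trace_smul, mul_fin_two, trace_fin_two_of, smul_eq_mul]
  ring

theorem trace_dM_mul_wM : (dM * wM).trace = 0 := by
  rw [dM, wM, Matrix.mul_smul, Matrix.smul_mul, trace_smul, trace_smul, mul_fin_two,
    trace_fin_two_of, smul_eq_mul, smul_eq_mul]
  ring

theorem iM_sq : iM ^ 2 = -1 :=
  sq_eq_neg_one_of_trace_det (by simp [iM, trace_fin_two]) det_iM

theorem wM_pow_three : wM ^ 3 = 1 :=
  pow_three_eq_one_of_trace_det trace_wM det_wM

theorem iM_mul_wM_pow_three : (iM * wM) ^ 3 = 1 :=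
  pow_three_eq_one_of_trace_det trace_iM_mul_wM (by simp [det_iM, det_wM])

theorem dM_sq : dM ^ 2 = 1 :=
  sq_eq_one_of_trace_det (by simp [dM, trace_fin_two]) det_dM

theorem dM_mul_iM_sq : (dM * iM) ^ 2 = 1 :=
  sq_eq_one_of_trace_det (by simp [dM, iM, trace_fin_two]) (by simp [det_iM, det_dM])

theorem dM_mul_wM_sq : (dM * wM) ^ 2 = 1 :=
  sq_eq_one_of_trace_det trace_dM_mul_wM (by simp [det_wM, det_dM])

theorem orderOf_iM : orderOf iM = 4 := by
  have hne : iM ^ 2 ≠ 1 := by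
    rw [iM_sq]
    intro h
    have hentry := congrFun₂ h 0 0
    norm_num at hentry
  exact orderOf_eq_prime_pow (p := 2) (n := 1) hne (by simp [pow_mul iM 2 2, iM_sq])

/-- The generator of `G` with matrix `iM`. -/
def iG : G :=
  ⟨.mkOfDetNeZero iM (by simp [det_iM]), subset_closure (Or.inl rfl)⟩

/-- The generator of `G` with matrix `wM`. -/
def wG : G :=
  ⟨.mkOfDetNeZero wM (by simp [det_wM]), subset_closure (Or.inr (Or.inl rfl))⟩

/-- The generator of `G` with matrix `dM`. -/
def dG : G :=
  ⟨.mkOfDetNeZero dM (by simp [det_dM]), subset_closure (Or.inr (Or.inr rfl))⟩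

/-- The matrix of an element of `G`, as a monoid homomorphism. -/
def toMatrixHom : G →* Matrix (Fin 2) (Fin 2) ℂ :=
  (Units.coeHom _).comp G.subtype

theorem toMatrixHom_injective : Function.Injective toMatrixHom :=
  Units.val_injective.comp Subtype.val_injective

theorem toMatrixHom_iG : toMatrixHom iG = iM := rfl

theorem toMatrixHom_wG : toMatrixHom wG = wM := rfl

theorem toMatrixHom_dG : toMatrixHom dG = dM := rfl

theorem toMatrixHom_eq_iM_iff {g : G} : toMatrixHom g = iM ↔ g = iG :=
  toMatrixHom_injective.eq_iff' toMatrixHom_iG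

theorem toMatrixHom_eq_wM_iff {g : G} : toMatrixHom g = wM ↔ g = wG :=
  toMatrixHom_injective.eq_iff' toMatrixHom_wG

theorem toMatrixHom_eq_dM_iff {g : G} : toMatrixHom g = dM ↔ g = dG :=
  toMatrixHom_injective.eq_iff' toMatrixHom_dG

theorem T_eq_closure : T = Subgroup.closure {iG, wG} :=
  congrArg Subgroup.closure <| Set.ext fun _ =>
    or_congr toMatrixHom_eq_iM_iff toMatrixHom_eq_wM_iff

theorem closure_generators_eq_top : Subgroup.closure {iG, wG, dG} = ⊤ :=
  Eq.trans (congrArg Subgroup.closure <| Set.ext fun _ => Iff.symm <|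
    or_congr toMatrixHom_eq_iM_iff <| or_congr toMatrixHom_eq_wM_iff toMatrixHom_eq_dM_iff)
    closure_closure_coe_preimage

theorem isBinaryTetrahedralPair_iG_wG : IsBinaryTetrahedralPair iG wG where
  orderOf_left := by
    rw [← orderOf_injective toMatrixHom toMatrixHom_injective, toMatrixHom_iG, orderOf_iM]
  commute_sq := toMatrixHom_injective (by simp [toMatrixHom_iG, iM_sq])
  pow_three := toMatrixHom_injective (by simp [toMatrixHom_wG, wM_pow_three])
  mul_pow_three := toMatrixHom_injective
    (by simp [toMatrixHom_iG, toMatrixHom_wG, iM_mul_wM_pow_three])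

theorem card_T : Nat.card T = 24 := by
  rw [T_eq_closure, isBinaryTetrahedralPair_iG_wG.card_closure]

theorem det_eq_one_of_mem_T {g : G} (hg : g ∈ T) : (toMatrixHom g).det = 1 := by
  have hT : T ≤ (detMonoidHom.comp toMatrixHom).ker := by
    rw [T_eq_closure, closure_le, Set.pair_subset_iff]
    exact ⟨det_iM, det_wM⟩
  exact hT hg

theorem dG_notMem_T : dG ∉ T := by
  intro hd
  have hdet : dM.det = 1 := toMatrixHom_dG ▸ det_eq_one_of_mem_T hd
  norm_num [det_dM] at hdet

theorem dG_sq : dG ^ 2 = 1 :=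
  toMatrixHom_injective (by simp [toMatrixHom_dG, dM_sq])

theorem dG_conj_iG : dG * iG * dG⁻¹ = iG⁻¹ :=
  conj_eq_inv_of_sq_eq_one dG_sq
    (toMatrixHom_injective (by simp [toMatrixHom_dG, toMatrixHom_iG, dM_mul_iM_sq]))

theorem dG_conj_wG : dG * wG * dG⁻¹ = wG⁻¹ :=
  conj_eq_inv_of_sq_eq_one dG_sq
    (toMatrixHom_injective (by simp [toMatrixHom_dG, toMatrixHom_wG, dM_mul_wM_sq]))

theorem index_T : T.index = 2 := by
  have : Finite T := Nat.finite_of_card_ne_zero (by simp [card_T])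
  have hd := dG_notMem_T
  rw [T_eq_closure] at this hd ⊢
  have hconj : ∀ s ∈ ({iG, wG} : Set G), dG * s * dG⁻¹ ∈ Subgroup.closure {iG, wG} := by
    rintro s (rfl | rfl)
    · exact dG_conj_iG ▸ inv_mem (subset_closure (by simp))
    · exact dG_conj_wG ▸ inv_mem (subset_closure (by simp))
  rw [← relIndex_top_right, ← closure_generators_eq_top, Set.pair_comm wG, Set.insert_comm iG]
  exact relIndex_closure_insert_of_prime hconj (dG_sq ▸ one_mem _) hd

theorem binary_tetrahedral_normal_of_index_two :
    Nat.card T = 24 ∧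
    T.index = 2 ∧
    ∃ hT : T.Normal, QuotIsCyclicOfOrderTwo T hT := by
  have hT : T.Normal := normal_of_index_eq_two index_T
  have hquot : Nat.card (G ⧸ T) = 2 := index_T
  exact ⟨card_T, index_T, hT, isCyclic_of_prime_card hquot, hquot⟩
end
end
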